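/- Soundness of rule L2: Let K be a statistical ALC knowledge base, C₁, C₂ ALC concepts, and m₁, m₂ rationals in [0,1] such that K ⊨_l (C₁|⊤)[m₁,1] and K ⊨_l (C₂|⊤)[m₂,1]. Then K ⊨_l (C₁ ⊓ C₂|⊤)[max(0, m₁ + m₂ − 1), 1]. In particular, if every model of K additionally satisfies the GCI C₁ ⊓ C₂ ⊑ D, then K ⊨_l (D|⊤)[max(0, m₁ + m₂ − 1), 1]. -/

import Mathlib

open scoped Classical

/-- ALC concepts over concept names and role names (both drawn from ℕ,
regarded as disjoint name spaces). -/
inductive Cpt : Type where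
  | top : Cpt
  | atom : ℕ → Cpt
  | neg : Cpt → Cpt
  | inter : Cpt → Cpt → Cpt
  | ex : ℕ → Cpt → Cpt
deriving DecidableEq

/-- A finite interpretation with domain drawn from the type `α`. -/
structure Interp (α : Type) where
  dom : Finset α
  dom_nonempty : dom.Nonempty
  conc : ℕ → Finset α
  conc_sub : ∀ a, conc a ⊆ dom
  role : ℕ → Finset (α × α)
  role_sub : ∀ r, role r ⊆ dom ×ˢ dom

/-- The extension `C^I` of a concept. -/
noncomputable def Interp.ext {α : Type} (I : Interp α) : Cpt → Finset α
  | .top => I.dom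
  | .atom a => I.conc a
  | .neg c => I.dom \ I.ext c
  | .inter c d => I.ext c ∩ I.ext d
  | .ex r c => I.dom.filter (fun d => ∃ e ∈ I.ext c, (d, e) ∈ I.role r)

/-- `[C]^I`, the cardinality of the extension of `C`. -/
noncomputable def cardC {α : Type} (I : Interp α) (c : Cpt) : ℕ := (I.ext c).card

/-- A probabilistic conditional `(C|D)[l,u]`. -/
structure Cond : Type where
  C : Cpt
  D : Cpt
  l : ℚ
  u : ℚ
deriving DecidableEq

/-- `I ⊨ (C|D)[l,u]` iff `[D]^I = 0` or `l ≤ [C ⊓ D]^I/[D]^I ≤ u`. -/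
def satCond {α : Type} (I : Interp α) (κ : Cond) : Prop :=
  cardC I κ.D = 0 ∨
    (κ.l ≤ (cardC I (.inter κ.C κ.D) : ℚ) / (cardC I κ.D : ℚ) ∧
     (cardC I (.inter κ.C κ.D) : ℚ) / (cardC I κ.D : ℚ) ≤ κ.u)

/-- Finite interpretations (with domain drawn from the countable set ℕ). -/
abbrev FInterp := Interp ℕ

/-- The models of a knowledge base (finite set of conditionals). -/
def Models (K : Finset Cond) : Set FInterp := {I | ∀ κ ∈ K, satCond I κ}

/-- l-entailment: every model of `K` satisfies the conditional. -/
def entailsL (K : Finset Cond) (κ : Cond) : Prop := ∀ I ∈ Models K, satCond I κ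

/-!
Two subsets of a finite set `E` that fill at least the fractions `m₁` and `m₂` of it overlap in at
least the fraction `m₁ + m₂ - 1`, because their union cannot fill more than all of `E`.
-/

theorem card_add_card_le_card_add_card_inter {α : Type*} [DecidableEq α] {s t u : Finset α}
    (hs : s ⊆ u) (ht : t ⊆ u) : s.card + t.card ≤ u.card + (s ∩ t).card :=
  calc
    s.card + t.card = (s ∪ t).card + (s ∩ t).card := (Finset.card_union_add_card_inter s t).symm
    _ ≤ u.card + (s ∩ t).card := by gcongr; exact Finset.union_subset hs ht

namespace Interp

variable {α : Type} (I : Interp α)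

theorem ext_inter_subset_left (C D : Cpt) : I.ext (.inter C D) ⊆ I.ext C :=
  Finset.inter_subset_left

theorem ext_inter_subset_right (C D : Cpt) : I.ext (.inter C D) ⊆ I.ext D :=
  Finset.inter_subset_right

/-- The proportion `[C ⊓ E]^I / [E]^I` that a conditional `(C|E)[l,u]` constrains. It is `0` when
`[E]^I = 0`, so it carries no information in that case. -/
noncomputable def proportion (C E : Cpt) : ℚ :=
  cardC I (.inter C E) / cardC I E

theorem satCond_iff_proportion_mem_Icc {C E : Cpt} {l u : ℚ} :
    satCond I ⟨C, E, l, u⟩ ↔ cardC I E = 0 ∨ I.proportion C E ∈ Set.Icc l u :=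
  Iff.rfl

theorem proportion_nonneg (C E : Cpt) : 0 ≤ I.proportion C E :=
  div_nonneg (Nat.cast_nonneg _) (Nat.cast_nonneg _)

theorem proportion_le_one (C E : Cpt) : I.proportion C E ≤ 1 :=
  div_le_one_of_le₀ (mod_cast Finset.card_le_card (I.ext_inter_subset_right C E))
    (Nat.cast_nonneg _)

theorem proportion_le_proportion {C D E : Cpt} (h : I.ext (.inter C E) ⊆ I.ext D) :
    I.proportion C E ≤ I.proportion D E := by
  have hsub : I.ext (.inter C E) ⊆ I.ext (.inter D E) :=
    Finset.subset_inter h (I.ext_inter_subset_right C E)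
  exact div_le_div_of_nonneg_right (mod_cast Finset.card_le_card hsub) (Nat.cast_nonneg _)

theorem cardC_inter_add_cardC_inter_le (C₁ C₂ E : Cpt) :
    cardC I (.inter C₁ E) + cardC I (.inter C₂ E) ≤
      cardC I E + cardC I (.inter (.inter C₁ C₂) E) := by
  have hinter : I.ext (.inter (.inter C₁ C₂) E) = I.ext (.inter C₁ E) ∩ I.ext (.inter C₂ E) :=
    Finset.inter_inter_distrib_right _ _ _
  rw [cardC, cardC, cardC, cardC, hinter]
  exact card_add_card_le_card_add_card_inter (I.ext_inter_subset_right C₁ E)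
    (I.ext_inter_subset_right C₂ E)

theorem proportion_add_proportion_le (C₁ C₂ E : Cpt) :
    I.proportion C₁ E + I.proportion C₂ E ≤ 1 + I.proportion (.inter C₁ C₂) E := by
  have hcard : (cardC I (.inter C₁ E) + cardC I (.inter C₂ E) : ℚ) ≤
      cardC I E + cardC I (.inter (.inter C₁ C₂) E) :=
    mod_cast I.cardC_inter_add_cardC_inter_le C₁ C₂ E
  calc
    I.proportion C₁ E + I.proportion C₂ E
        = (cardC I (.inter C₁ E) + cardC I (.inter C₂ E)) / cardC I E := (add_div _ _ _).symm
    _ ≤ (cardC I E + cardC I (.inter (.inter C₁ C₂) E)) / cardC I E := by gcongr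
    _ = cardC I E / cardC I E + I.proportion (.inter C₁ C₂) E := add_div _ _ _
    _ ≤ 1 + I.proportion (.inter C₁ C₂) E := by gcongr; exact div_self_le_one _

end Interp

theorem rule_L2_sound_general {K : Finset Cond} {C₁ C₂ D E : Cpt} {m₁ m₂ u₁ u₂ : ℚ}
    (e₁ : entailsL K ⟨C₁, E, m₁, u₁⟩) (e₂ : entailsL K ⟨C₂, E, m₂, u₂⟩)
    (hD : ∀ I ∈ Models K, I.ext (.inter (.inter C₁ C₂) E) ⊆ I.ext D) :
    entailsL K ⟨D, E, max 0 (m₁ + m₂ - 1), 1⟩ := by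
  intro I hI
  rw [I.satCond_iff_proportion_mem_Icc]
  rcases I.satCond_iff_proportion_mem_Icc.1 (e₁ I hI) with hE | ⟨h₁, -⟩
  · exact .inl hE
  rcases I.satCond_iff_proportion_mem_Icc.1 (e₂ I hI) with hE | ⟨h₂, -⟩
  · exact .inl hE
  have hlower : m₁ + m₂ - 1 ≤ I.proportion D E :=
    calc
      m₁ + m₂ - 1 ≤ I.proportion C₁ E + I.proportion C₂ E - 1 := by gcongr
      _ ≤ I.proportion (.inter C₁ C₂) E :=
        sub_le_iff_le_add'.2 (I.proportion_add_proportion_le C₁ C₂ E)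
      _ ≤ I.proportion D E := I.proportion_le_proportion (hD I hI)
  exact .inr ⟨max_le (I.proportion_nonneg D E) hlower, I.proportion_le_one D E⟩

/-- Soundness of rule L2. -/
theorem rule_L2_sound (K : Finset Cond) (C1 C2 : Cpt) (m1 m2 : ℚ)
    (h10 : 0 ≤ m1) (h11 : m1 ≤ 1) (h20 : 0 ≤ m2) (h21 : m2 ≤ 1)
    (e1 : entailsL K ⟨C1, .top, m1, 1⟩) (e2 : entailsL K ⟨C2, .top, m2, 1⟩) :
    entailsL K ⟨.inter C1 C2, .top, max 0 (m1 + m2 - 1), 1⟩ ∧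
    (∀ D : Cpt, (∀ I ∈ Models K, I.ext (.inter C1 C2) ⊆ I.ext D) →
      entailsL K ⟨D, .top, max 0 (m1 + m2 - 1), 1⟩) := by
  exact ⟨rule_L2_sound_general e1 e2 fun I _ => I.ext_inter_subset_left _ _, fun _ hD =>
    rule_L2_sound_general e1 e2 fun I hI => (I.ext_inter_subset_left _ _).trans (hD I hI)⟩
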